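/- Assume ρ s > 0 for every state s. Let Π* be the set of optimal policies, Π* = {π : π is a policy and J(π') ≤ J(π) for every policy π'}. Then there exists exactly one policy π* ∈ Π* maximizing the discounted-visitation-weighted entropy over Π*; that is, there is a unique π* ∈ Π* such that ∑_s d_ρ^π(s) · E(π,s) ≤ ∑_s d_ρ^{π*}(s) · E(π*,s) for every π ∈ Π*. -/

import Mathlib

open Finset Matrix

noncomputable section

variable {S A : Type*}

/-- A transition kernel: nonnegative entries, rows summing to one. -/
def IsKernel [Fintype S] [Fintype A] (K : S → A → S → ℝ) : Prop :=
  (∀ s a s', 0 ≤ K s a s') ∧ (∀ s a, ∑ s', K s a s' = 1)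

/-- A (stochastic) policy: nonnegative entries, rows summing to one. -/
def IsPolicy [Fintype A] (π : S → A → ℝ) : Prop :=
  (∀ s a, 0 ≤ π s a) ∧ (∀ s, ∑ a, π s a = 1)

/-- The policy-induced transition matrix `P^π`. -/
def Pmat [Fintype A] (K : S → A → S → ℝ) (π : S → A → ℝ) : Matrix S S ℝ :=
  Matrix.of fun s s' => ∑ a, π s a * K s a s'

/-- The entropy `E(π, s)` of a policy at state `s`. -/
def entS [Fintype A] (π : S → A → ℝ) (s : S) : ℝ :=
  ∑ a, -(π s a * Real.log (π s a))

/-- The entropy-regularized one-step cost `c_τ^π`. -/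
def regCost [Fintype A] (r : S → A → ℝ) (τ : ℝ) (π : S → A → ℝ) (s : S) : ℝ :=
  (∑ a, π s a * r s a) + τ * entS π s

/-- The entropy-regularized value function `V_τ^π`. -/
def Vreg [Fintype S] [Fintype A] [DecidableEq S] (K : S → A → S → ℝ) (r : S → A → ℝ)
    (γ τ : ℝ) (π : S → A → ℝ) : S → ℝ :=
  ∑' k : ℕ, γ ^ k • ((Pmat K π) ^ k *ᵥ regCost r τ π)

/-- The entropy-regularized expected return `J_τ(π)`. -/
def Jreg [Fintype S] [Fintype A] [DecidableEq S] (K : S → A → S → ℝ) (r : S → A → ℝ)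
    (γ τ : ℝ) (ρ : S → ℝ) (π : S → A → ℝ) : ℝ :=
  ∑ s, ρ s * Vreg K r γ τ π s

/-- The discounted state-visitation distribution `d_ρ^π`. -/
def dvisit [Fintype S] [Fintype A] [DecidableEq S] (K : S → A → S → ℝ)
    (γ : ℝ) (ρ : S → ℝ) (π : S → A → ℝ) : S → ℝ :=
  (1 - γ) • ∑' k : ℕ, γ ^ k • (((Pmat K π)ᵀ) ^ k *ᵥ ρ)

/-!
Writing `R = (1 - γ P^π)⁻¹`, we have `V_τ^π = R c_τ^π` and `d_ρ^π = (1 - γ) ρᵀ R`, so that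
`(1 - γ) J_τ(π) = d_ρ^π ⬝ c_τ^π`. Since `ρ > 0` forces every state to be visited, `π` can be
recovered from its occupancy measure `x s a = d_ρ^π(s) π(a | s)` by conditioning on the state, and
policies correspond bijectively to the points of the compact polytope cut out by the Bellman flow
equations. In these coordinates the return is linear, so `Π*` becomes an exposed face, which is
again compact and convex. The weighted entropy becomes the conditional entropy of the action given
the state, a sum of perspectives of the strictly concave entropy; two distinct points of the
polytope have distinct conditionals, so it is strictly concave there and has exactly one maximizer
on the face.
-/

section RowStochasticResolvent

variable {n : Type*} [Fintype n] [DecidableEq n]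

section LinftyOpNorm

open scoped Matrix.Norms.Operator

lemma norm_le_one_of_mem_rowStochastic {P : Matrix n n ℝ} (hP : P ∈ rowStochastic ℝ n) :
    ‖P‖ ≤ 1 := by
  rw [← coe_nnnorm, NNReal.coe_le_one, Matrix.linfty_opNNNorm_def]
  refine Finset.sup_le fun i _ => ?_
  rw [← NNReal.coe_le_one, NNReal.coe_sum, ← sum_row_of_mem_rowStochastic hP i]
  simp only [coe_nnnorm, Real.norm_of_nonneg (nonneg_of_mem_rowStochastic hP), le_refl]

lemma norm_smul_lt_one_of_mem_rowStochastic {P : Matrix n n ℝ} (hP : P ∈ rowStochastic ℝ n)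
    {γ : ℝ} (hγ : |γ| < 1) : ‖γ • P‖ < 1 :=
  calc ‖γ • P‖ = |γ| * ‖P‖ := norm_smul γ P
    _ ≤ |γ| := mul_le_of_le_one_right (abs_nonneg γ) (norm_le_one_of_mem_rowStochastic hP)
    _ < 1 := hγ

lemma isUnit_one_sub_smul_of_mem_rowStochastic {P : Matrix n n ℝ}
    (hP : P ∈ rowStochastic ℝ n) {γ : ℝ} (hγ : |γ| < 1) : IsUnit (1 - γ • P) :=
  isUnit_one_sub_of_norm_lt_one (norm_smul_lt_one_of_mem_rowStochastic hP hγ)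

lemma hasSum_smul_pow_of_mem_rowStochastic {P : Matrix n n ℝ}
    (hP : P ∈ rowStochastic ℝ n) {γ : ℝ} (hγ : |γ| < 1) :
    HasSum (fun k : ℕ => γ ^ k • P ^ k) (1 - γ • P)⁻¹ := by
  simp_rw [← smul_pow, nonsing_inv_eq_ringInverse]
  exact hasSum_geom_series_inverse (γ • P) (norm_smul_lt_one_of_mem_rowStochastic hP hγ)

end LinftyOpNorm

lemma hasSum_smul_pow_mulVec {P : Matrix n n ℝ} (hP : P ∈ rowStochastic ℝ n)
    {γ : ℝ} (hγ : |γ| < 1) (v : n → ℝ) :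
    HasSum (fun k : ℕ => γ ^ k • (P ^ k *ᵥ v)) ((1 - γ • P)⁻¹ *ᵥ v) := by
  simpa only [Function.comp_def, LinearMap.flip_apply, mulVecBilin_apply, smul_mulVec] using
    (hasSum_smul_pow_of_mem_rowStochastic hP hγ).map ((mulVecBilin ℝ ℝ).flip v)
      (continuous_id.matrix_mulVec continuous_const)

lemma hasSum_smul_pow_transpose_mulVec {P : Matrix n n ℝ} (hP : P ∈ rowStochastic ℝ n)
    {γ : ℝ} (hγ : |γ| < 1) (v : n → ℝ) :
    HasSum (fun k : ℕ => γ ^ k • (Pᵀ ^ k *ᵥ v)) (v ᵥ* (1 - γ • P)⁻¹) := by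
  simpa only [Function.comp_def, vecMulBilin_apply, vecMul_smul, ← transpose_pow,
    mulVec_transpose] using
    (hasSum_smul_pow_of_mem_rowStochastic hP hγ).map (vecMulBilin ℝ ℝ v)
      (continuous_const.matrix_vecMul continuous_id)

lemma vecMul_inv_one_sub_smul_nonneg {P : Matrix n n ℝ} (hP : P ∈ rowStochastic ℝ n)
    {γ : ℝ} (hγ0 : 0 ≤ γ) (hγ1 : γ < 1) {v : n → ℝ} (hv : 0 ≤ v) :
    0 ≤ v ᵥ* (1 - γ • P)⁻¹ := by
  have hγ : |γ| < 1 := abs_lt.2 ⟨by linarith, hγ1⟩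
  refine (hasSum_smul_pow_transpose_mulVec hP hγ v).nonneg fun k => ?_
  rw [← transpose_pow, mulVec_transpose]
  exact smul_nonneg (pow_nonneg hγ0 k) (nonneg_vecMul_of_mem_rowStochastic (pow_mem hP k) hv)

end RowStochasticResolvent

section Concave

variable {E : Type*} [AddCommGroup E] [Module ℝ E] {s : Set E} {f : E → ℝ}

lemma existsUnique_isMaxOn_of_strictConcaveOn [TopologicalSpace E] (hs : IsCompact s)
    (hne : s.Nonempty) (hf : StrictConcaveOn ℝ s f) (hcont : ContinuousOn f s) :
    ∃! x, x ∈ s ∧ IsMaxOn f s x := by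
  obtain ⟨x, hx, hmax⟩ := hs.exists_isMaxOn hne hcont
  exact ⟨x, ⟨hx, hmax⟩, fun y hy => hf.eq_of_isMaxOn hy.2 hmax hy.1 hx⟩

lemma weighted_sum_le_of_concaveOn (hf : ConcaveOn ℝ s f) {p q : E} (hp : p ∈ s) (hq : q ∈ s)
    {m n : ℝ} (hm : 0 < m) (hn : 0 < n) :
    m * f p + n * f q ≤ (m + n) * f ((m / (m + n)) • p + (n / (m + n)) • q) := by
  have hmn : 0 < m + n := add_pos hm hn
  have jensen := (concaveOn_iff_div.1 hf).2 hp hq hm.le hn.le hmn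
  calc m * f p + n * f q
      = (m + n) * ((m / (m + n)) • f p + (n / (m + n)) • f q) := by
        simp only [smul_eq_mul]; field_simp
    _ ≤ _ := mul_le_mul_of_nonneg_left jensen hmn.le

lemma weighted_sum_lt_of_strictConcaveOn (hf : StrictConcaveOn ℝ s f) {p q : E} (hp : p ∈ s)
    (hq : q ∈ s) (hpq : p ≠ q) {m n : ℝ} (hm : 0 < m) (hn : 0 < n) :
    m * f p + n * f q < (m + n) * f ((m / (m + n)) • p + (n / (m + n)) • q) := by
  have hmn : 0 < m + n := add_pos hm hn
  have jensen := (strictConcaveOn_iff_div.1 hf).2 hp hq hpq hm hn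
  calc m * f p + n * f q
      = (m + n) * ((m / (m + n)) • f p + (n / (m + n)) • f q) := by
        simp only [smul_eq_mul]; field_simp
    _ < _ := mul_lt_mul_of_pos_left jensen hmn

lemma strictConcaveOn_sum_negMulLog {ι : Type*} [Fintype ι] :
    StrictConcaveOn ℝ (Set.Ici (0 : ι → ℝ)) (fun p => ∑ i, Real.negMulLog (p i)) := by
  refine ⟨convex_Ici 0, fun p hp q hq hpq a b ha hb hab => ?_⟩
  obtain ⟨i, hi⟩ := Function.ne_iff.1 hpq
  simp only [smul_eq_mul, mul_sum, ← sum_add_distrib]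
  refine sum_lt_sum (fun j _ => ?_) ⟨i, mem_univ i, ?_⟩
  · exact Real.strictConcaveOn_negMulLog.concaveOn.2 (hp j) (hq j) ha.le hb.le hab
  · exact Real.strictConcaveOn_negMulLog.2 (hp i) (hq i) hi ha hb hab

end Concave

section ResolventFormulas

variable [Fintype S] [Fintype A] [DecidableEq S] {K : S → A → S → ℝ} {π : S → A → ℝ} {γ : ℝ}

lemma Pmat_mem_rowStochastic (hK : IsKernel K) (hπ : IsPolicy π) :
    Pmat K π ∈ rowStochastic ℝ S := by
  refine mem_rowStochastic_iff_sum.2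
    ⟨fun s s' => sum_nonneg fun a _ => mul_nonneg (hπ.1 s a) (hK.1 s a s'), fun s => ?_⟩
  simp only [Pmat, of_apply]
  rw [sum_comm]
  simp only [← mul_sum, hK.2, mul_one, hπ.2]

lemma Vreg_eq_inv_mulVec (hP : Pmat K π ∈ rowStochastic ℝ S) (hγ : |γ| < 1)
    (r : S → A → ℝ) (τ : ℝ) :
    Vreg K r γ τ π = (1 - γ • Pmat K π)⁻¹ *ᵥ regCost r τ π :=
  (hasSum_smul_pow_mulVec hP hγ _).tsum_eq

lemma dvisit_eq_vecMul_inv (hP : Pmat K π ∈ rowStochastic ℝ S) (hγ : |γ| < 1) (ρ : S → ℝ) :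
    dvisit K γ ρ π = (1 - γ) • (ρ ᵥ* (1 - γ • Pmat K π)⁻¹) :=
  congrArg ((1 - γ) • ·) (hasSum_smul_pow_transpose_mulVec hP hγ ρ).tsum_eq

lemma one_sub_mul_Jreg (hP : Pmat K π ∈ rowStochastic ℝ S) (hγ : |γ| < 1)
    (r : S → A → ℝ) (τ : ℝ) (ρ : S → ℝ) :
    (1 - γ) * Jreg K r γ τ ρ π = dvisit K γ ρ π ⬝ᵥ regCost r τ π := by
  rw [dvisit_eq_vecMul_inv hP hγ, smul_dotProduct, ← dotProduct_mulVec,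
    ← Vreg_eq_inv_mulVec hP hγ, smul_eq_mul, Jreg, dotProduct]

lemma eq_dvisit_iff (hP : Pmat K π ∈ rowStochastic ℝ S) (hγ : |γ| < 1) {ρ d : S → ℝ} :
    d = dvisit K γ ρ π ↔
      ∀ s', d s' = (1 - γ) * ρ s' + γ * ∑ s, d s * Pmat K π s s' := by
  have hdet := (isUnit_iff_isUnit_det _).1 (isUnit_one_sub_smul_of_mem_rowStochastic hP hγ)
  calc d = dvisit K γ ρ π
    _ ↔ d ᵥ* (1 - γ • Pmat K π) = (1 - γ) • ρ := by
      rw [dvisit_eq_vecMul_inv hP hγ, ← smul_vecMul]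
      constructor <;> intro h
      · rw [h, vecMul_vecMul, nonsing_inv_mul _ hdet, vecMul_one]
      · rw [← h, vecMul_vecMul, mul_nonsing_inv _ hdet, vecMul_one]
    _ ↔ _ := by
      simp only [vecMul_sub, vecMul_one, vecMul_smul, sub_eq_iff_eq_add, funext_iff,
        Pi.add_apply, Pi.smul_apply, smul_eq_mul, vecMul, dotProduct]

lemma dvisit_nonneg (hP : Pmat K π ∈ rowStochastic ℝ S) (hγ0 : 0 ≤ γ) (hγ1 : γ < 1)
    {ρ : S → ℝ} (hρ : 0 ≤ ρ) : 0 ≤ dvisit K γ ρ π := by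
  rw [dvisit_eq_vecMul_inv hP (abs_lt.2 ⟨by linarith, hγ1⟩)]
  exact smul_nonneg (by linarith) (vecMul_inv_one_sub_smul_nonneg hP hγ0 hγ1 hρ)

end ResolventFormulas

section OccupancyMeasures

/-- The polytope of discounted state-action occupancy measures: the nonnegative solutions of the
Bellman flow equations, whose right-hand side carries the factor `1 - γ` because `dvisit` is
normalised. -/
def occupancyPolytope [Fintype S] [Fintype A] (K : S → A → S → ℝ) (γ : ℝ) (ρ : S → ℝ) :
    Set (S → A → ℝ) :=
  {x | (∀ s a, 0 ≤ x s a) ∧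
    ∀ s', ∑ a, x s' a = (1 - γ) * ρ s' + γ * ∑ s, ∑ a, x s a * K s a s'}

/-- The state marginal of a state-action measure. -/
def stateMarginal [Fintype A] (x : S → A → ℝ) (s : S) : ℝ :=
  ∑ a, x s a

/-- The policy obtained from a state-action measure by conditioning on the state; it takes the junk
value `0` at states of marginal `0`. -/
def condPolicy [Fintype A] (x : S → A → ℝ) (s : S) (a : A) : ℝ :=
  x s a / stateMarginal x s

/-- The discounted state-action occupancy measure of a policy. -/
def occupancy [Fintype S] [Fintype A] [DecidableEq S] (K : S → A → S → ℝ) (γ : ℝ) (ρ : S → ℝ)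
    (π : S → A → ℝ) (s : S) (a : A) : ℝ :=
  dvisit K γ ρ π s * π s a

section Marginals

variable [Fintype A]

lemma stateMarginal_mul_policy {π : S → A → ℝ} (hπ : IsPolicy π) (d : S → ℝ) :
    stateMarginal (fun s a => d s * π s a) = d := by
  funext s
  simp only [stateMarginal, ← mul_sum, hπ.2, mul_one]

lemma condPolicy_mul_policy {π : S → A → ℝ} (hπ : IsPolicy π) {d : S → ℝ} (hd : ∀ s, d s ≠ 0) :
    condPolicy (fun s a => d s * π s a) = π := by
  funext s a
  rw [condPolicy, stateMarginal_mul_policy hπ, mul_div_cancel_left₀ _ (hd s)]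

lemma stateMarginal_mul_condPolicy {x : S → A → ℝ} {s : S} (hx : stateMarginal x s ≠ 0) (a : A) :
    stateMarginal x s * condPolicy x s a = x s a :=
  mul_div_cancel₀ _ hx

lemma isPolicy_condPolicy {x : S → A → ℝ} (hx : ∀ s a, 0 ≤ x s a)
    (hpos : ∀ s, 0 < stateMarginal x s) : IsPolicy (condPolicy x) := by
  refine ⟨fun s a => div_nonneg (hx s a) (hpos s).le, fun s => ?_⟩
  simp only [condPolicy, ← sum_div]
  exact div_self (hpos s).ne'

lemma stateMarginal_smul_add_smul (x y : S → A → ℝ) (a b : ℝ) (s : S) :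
    stateMarginal (a • x + b • y) s = a * stateMarginal x s + b * stateMarginal y s := by
  simp only [stateMarginal, Pi.add_apply, Pi.smul_apply, smul_eq_mul, sum_add_distrib, mul_sum]

lemma condPolicy_smul_add_smul {x y : S → A → ℝ} {s : S} (hx : stateMarginal x s ≠ 0)
    (hy : stateMarginal y s ≠ 0) (a b : ℝ) :
    condPolicy (a • x + b • y) s =
      (a * stateMarginal x s / (a * stateMarginal x s + b * stateMarginal y s)) • condPolicy x s +
      (b * stateMarginal y s / (a * stateMarginal x s + b * stateMarginal y s)) •
        condPolicy y s := by
  funext c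
  simp only [Pi.add_apply, Pi.smul_apply, smul_eq_mul, div_mul_eq_mul_div, mul_assoc,
    stateMarginal_mul_condPolicy hx, stateMarginal_mul_condPolicy hy, ← add_div]
  simp only [condPolicy, stateMarginal_smul_add_smul, Pi.add_apply, Pi.smul_apply, smul_eq_mul]

lemma isPolicy_uniform [Nonempty A] : IsPolicy fun (_ : S) (_ : A) => (Fintype.card A : ℝ)⁻¹ :=
  ⟨fun _ _ => by positivity, fun _ => by simp⟩

end Marginals

variable [Fintype S] [Fintype A] {K : S → A → S → ℝ} {γ : ℝ} {ρ : S → ℝ}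

lemma stateMarginal_pos_of_mem_occupancyPolytope (hK : IsKernel K) (hγ0 : 0 ≤ γ) (hγ1 : γ < 1)
    (hρ : ∀ s, 0 < ρ s) {x : S → A → ℝ} (hx : x ∈ occupancyPolytope K γ ρ) (s : S) :
    0 < stateMarginal x s := by
  rw [stateMarginal, hx.2 s]
  have hinflow : 0 ≤ ∑ s', ∑ a, x s' a * K s' a s :=
    sum_nonneg fun s' _ => sum_nonneg fun a _ => mul_nonneg (hx.1 s' a) (hK.1 s' a s)
  exact add_pos_of_pos_of_nonneg (mul_pos (sub_pos.2 hγ1) (hρ s)) (mul_nonneg hγ0 hinflow)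

lemma convex_occupancyPolytope : Convex ℝ (occupancyPolytope K γ ρ) := by
  rintro x ⟨hx, hxflow⟩ y ⟨hy, hyflow⟩ a b ha hb hab
  refine ⟨fun s c => add_nonneg (mul_nonneg ha (hx s c)) (mul_nonneg hb (hy s c)), fun s' => ?_⟩
  simp only [Pi.add_apply, Pi.smul_apply, smul_eq_mul, add_mul, mul_assoc, sum_add_distrib,
    ← mul_sum, hxflow s', hyflow s']
  linear_combination (1 - γ) * ρ s' * hab

lemma isClosed_occupancyPolytope : IsClosed (occupancyPolytope K γ ρ) := by
  simp only [occupancyPolytope, Set.ofPred_and, Set.ofPred_forall]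
  refine (isClosed_iInter fun s => isClosed_iInter fun a => ?_).inter (isClosed_iInter fun s => ?_)
  · exact isClosed_le (by fun_prop) (by fun_prop)
  · exact isClosed_eq (by fun_prop) (by fun_prop)

lemma sum_sum_eq_of_mem_occupancyPolytope (hK : IsKernel K) (hγ : γ ≠ 1) {x : S → A → ℝ}
    (hx : x ∈ occupancyPolytope K γ ρ) : ∑ s, ∑ a, x s a = ∑ s, ρ s := by
  have hmass : ∑ s', ∑ s, ∑ a, x s a * K s a s' = ∑ s, ∑ a, x s a := by
    rw [sum_comm]
    refine sum_congr rfl fun s _ => ?_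
    rw [sum_comm]
    simp only [← mul_sum, hK.2, mul_one]
  have hflow : ∑ s, ∑ a, x s a = (1 - γ) * ∑ s, ρ s + γ * ∑ s, ∑ a, x s a := by
    conv_lhs => rw [sum_congr rfl fun s _ => hx.2 s]
    rw [sum_add_distrib, ← mul_sum, ← mul_sum, hmass]
  refine mul_left_cancel₀ (sub_ne_zero.2 hγ.symm) ?_
  linear_combination hflow

lemma isCompact_occupancyPolytope (hK : IsKernel K) (hγ : γ ≠ 1) :
    IsCompact (occupancyPolytope K γ ρ) := by
  refine isCompact_Icc.of_isClosed_subset (s := Set.Icc 0 fun _ _ => ∑ s, ρ s)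
    isClosed_occupancyPolytope fun x hx => ⟨hx.1, fun s a => ?_⟩
  calc x s a ≤ ∑ b, x s b := single_le_sum (fun b _ => hx.1 s b) (mem_univ a)
    _ ≤ ∑ t, ∑ b, x t b :=
      single_le_sum (f := fun t => ∑ b, x t b) (fun t _ => sum_nonneg fun b _ => hx.1 t b)
        (mem_univ s)
    _ = ∑ s, ρ s := sum_sum_eq_of_mem_occupancyPolytope hK hγ hx

variable [DecidableEq S]

lemma mul_policy_mem_occupancyPolytope_iff (hK : IsKernel K) (hγ : |γ| < 1) {π : S → A → ℝ}
    (hπ : IsPolicy π) {d : S → ℝ} (hd : 0 ≤ d) :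
    (fun s a => d s * π s a) ∈ occupancyPolytope K γ ρ ↔ d = dvisit K γ ρ π := by
  have hnonneg : ∀ s a, 0 ≤ d s * π s a := fun s a => mul_nonneg (hd s) (hπ.1 s a)
  rw [eq_dvisit_iff (Pmat_mem_rowStochastic hK hπ) hγ]
  simp only [occupancyPolytope, Set.mem_ofPred_eq, hnonneg, implies_true, true_and, mul_assoc,
    ← mul_sum, hπ.2, mul_one, Pmat, of_apply]

lemma occupancy_mem_occupancyPolytope (hK : IsKernel K) (hγ0 : 0 ≤ γ) (hγ1 : γ < 1) (hρ : 0 ≤ ρ)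
    {π : S → A → ℝ} (hπ : IsPolicy π) : occupancy K γ ρ π ∈ occupancyPolytope K γ ρ :=
  (mul_policy_mem_occupancyPolytope_iff hK (abs_lt.2 ⟨by linarith, hγ1⟩) hπ
    (dvisit_nonneg (Pmat_mem_rowStochastic hK hπ) hγ0 hγ1 hρ)).2 rfl

lemma stateMarginal_occupancy {π : S → A → ℝ} (hπ : IsPolicy π) :
    stateMarginal (occupancy K γ ρ π) = dvisit K γ ρ π :=
  stateMarginal_mul_policy hπ _

lemma dvisit_pos (hK : IsKernel K) (hγ0 : 0 ≤ γ) (hγ1 : γ < 1) (hρ : ∀ s, 0 < ρ s)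
    {π : S → A → ℝ} (hπ : IsPolicy π) (s : S) : 0 < dvisit K γ ρ π s := by
  rw [← stateMarginal_occupancy hπ]
  exact stateMarginal_pos_of_mem_occupancyPolytope hK hγ0 hγ1 hρ
    (occupancy_mem_occupancyPolytope hK hγ0 hγ1 (fun t => (hρ t).le) hπ) s

lemma condPolicy_occupancy (hK : IsKernel K) (hγ0 : 0 ≤ γ) (hγ1 : γ < 1) (hρ : ∀ s, 0 < ρ s)
    {π : S → A → ℝ} (hπ : IsPolicy π) : condPolicy (occupancy K γ ρ π) = π :=
  condPolicy_mul_policy hπ fun s => (dvisit_pos hK hγ0 hγ1 hρ hπ s).ne'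

lemma occupancy_condPolicy (hK : IsKernel K) (hγ0 : 0 ≤ γ) (hγ1 : γ < 1) (hρ : ∀ s, 0 < ρ s)
    {x : S → A → ℝ} (hx : x ∈ occupancyPolytope K γ ρ) :
    occupancy K γ ρ (condPolicy x) = x := by
  have hpos := stateMarginal_pos_of_mem_occupancyPolytope hK hγ0 hγ1 hρ hx
  have hfactor : (fun s a => stateMarginal x s * condPolicy x s a) = x := by
    funext s a
    exact stateMarginal_mul_condPolicy (hpos s).ne' a
  have hvisit : stateMarginal x = dvisit K γ ρ (condPolicy x) :=
    (mul_policy_mem_occupancyPolytope_iff hK (abs_lt.2 ⟨by linarith, hγ1⟩)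
      (isPolicy_condPolicy hx.1 hpos) fun s => (hpos s).le).1 (hfactor.symm ▸ hx)
  funext s a
  rw [occupancy, ← hvisit, stateMarginal_mul_condPolicy (hpos s).ne']

lemma bijOn_occupancy (hK : IsKernel K) (hγ0 : 0 ≤ γ) (hγ1 : γ < 1) (hρ : ∀ s, 0 < ρ s) :
    Set.BijOn (occupancy K γ ρ) {π | IsPolicy π} (occupancyPolytope K γ ρ) :=
  Set.InvOn.bijOn (f' := condPolicy)
    ⟨fun _ hπ => condPolicy_occupancy hK hγ0 hγ1 hρ hπ,
      fun _ hx => occupancy_condPolicy hK hγ0 hγ1 hρ hx⟩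
    (fun _ hπ => occupancy_mem_occupancyPolytope hK hγ0 hγ1 (fun s => (hρ s).le) hπ)
    fun _ hx => isPolicy_condPolicy hx.1
      (stateMarginal_pos_of_mem_occupancyPolytope hK hγ0 hγ1 hρ hx)

end OccupancyMeasures

section ConditionalEntropy

variable [Fintype S] [Fintype A]

/-- The entropy of the action given the state under a state-action measure, that is, the
visitation-weighted policy entropy expressed through the occupancy measure. -/
def condEntropy (x : S → A → ℝ) : ℝ :=
  ∑ s, stateMarginal x s * entS (condPolicy x) s

lemma condEntropy_occupancy [DecidableEq S] {K : S → A → S → ℝ} (hK : IsKernel K) {γ : ℝ}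
    (hγ0 : 0 ≤ γ) (hγ1 : γ < 1) {ρ : S → ℝ} (hρ : ∀ s, 0 < ρ s) {π : S → A → ℝ}
    (hπ : IsPolicy π) :
    condEntropy (occupancy K γ ρ π) = ∑ s, dvisit K γ ρ π s * entS π s := by
  rw [condEntropy, stateMarginal_occupancy hπ, condPolicy_occupancy hK hγ0 hγ1 hρ hπ]

lemma continuousOn_condEntropy :
    ContinuousOn (condEntropy (S := S) (A := A)) {x | ∀ s, stateMarginal x s ≠ 0} := by
  have hmarginal (s : S) : Continuous fun x : S → A → ℝ => stateMarginal x s := by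
    unfold stateMarginal
    fun_prop
  unfold condEntropy entS
  refine continuousOn_finsetSum _ fun s _ => (hmarginal s).continuousOn.mul <|
    continuousOn_finsetSum _ fun a _ => (Real.continuous_mul_log.comp_continuousOn ?_).neg
  have hentry : Continuous fun x : S → A → ℝ => x s a := by fun_prop
  exact hentry.continuousOn.div (hmarginal s).continuousOn fun x hx => hx s

lemma strictConcaveOn_condEntropy {C : Set (S → A → ℝ)} (hC : Convex ℝ C)
    (hnonneg : ∀ x ∈ C, ∀ s a, 0 ≤ x s a) (hpos : ∀ x ∈ C, ∀ s, 0 < stateMarginal x s)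
    (hinj : Set.InjOn condPolicy C) : StrictConcaveOn ℝ C condEntropy := by
  refine ⟨hC, fun x hx y hy hxy a b ha hb _ => ?_⟩
  let h : (A → ℝ) → ℝ := fun p => ∑ c, Real.negMulLog (p c)
  have hent (π : S → A → ℝ) (s : S) : entS π s = h (π s) := by
    simp only [entS, h, Real.negMulLog, neg_mul]
  have hcond {z : S → A → ℝ} (hz : z ∈ C) (s : S) : condPolicy z s ∈ Set.Ici (0 : A → ℝ) :=
    (isPolicy_condPolicy (hnonneg z hz) (hpos z hz)).1 s
  have hmx (s : S) : 0 < a * stateMarginal x s := mul_pos ha (hpos x hx s)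
  have hmy (s : S) : 0 < b * stateMarginal y s := mul_pos hb (hpos y hy s)
  obtain ⟨s₀, hs₀⟩ := Function.ne_iff.1 (hinj.ne hx hy hxy)
  calc a • condEntropy x + b • condEntropy y
      = ∑ s, (a * stateMarginal x s * h (condPolicy x s) +
          b * stateMarginal y s * h (condPolicy y s)) := by
        simp only [condEntropy, hent, smul_eq_mul, mul_sum, sum_add_distrib, mul_assoc]
    _ < ∑ s, stateMarginal (a • x + b • y) s * h (condPolicy (a • x + b • y) s) := by
        simp only [stateMarginal_smul_add_smul,
          condPolicy_smul_add_smul (hpos x hx _).ne' (hpos y hy _).ne']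
        refine sum_lt_sum (fun s _ => ?_) ⟨s₀, mem_univ s₀, ?_⟩
        · exact weighted_sum_le_of_concaveOn strictConcaveOn_sum_negMulLog.concaveOn
            (hcond hx s) (hcond hy s) (hmx s) (hmy s)
        · exact weighted_sum_lt_of_strictConcaveOn strictConcaveOn_sum_negMulLog
            (hcond hx s₀) (hcond hy s₀) hs₀ (hmx s₀) (hmy s₀)
    _ = condEntropy (a • x + b • y) := by simp only [condEntropy, hent]

variable {K : S → A → S → ℝ} {γ : ℝ} {ρ : S → ℝ}

lemma nonempty_occupancyPolytope [Nonempty A] (hK : IsKernel K) (hγ0 : 0 ≤ γ) (hγ1 : γ < 1)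
    (hρ : 0 ≤ ρ) : (occupancyPolytope K γ ρ).Nonempty := by
  classical
  exact ⟨_, occupancy_mem_occupancyPolytope hK hγ0 hγ1 hρ isPolicy_uniform⟩

lemma strictConcaveOn_condEntropy_occupancyPolytope (hK : IsKernel K) (hγ0 : 0 ≤ γ) (hγ1 : γ < 1)
    (hρ : ∀ s, 0 < ρ s) : StrictConcaveOn ℝ (occupancyPolytope K γ ρ) condEntropy := by
  classical
  exact strictConcaveOn_condEntropy convex_occupancyPolytope (fun x hx => hx.1)
    (fun x hx => stateMarginal_pos_of_mem_occupancyPolytope hK hγ0 hγ1 hρ hx)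
    (Set.LeftInvOn.injOn fun x hx => occupancy_condPolicy hK hγ0 hγ1 hρ hx)

lemma existsUnique_isMaxOn_condEntropy_toExposed [Nonempty A] (hK : IsKernel K) (hγ0 : 0 ≤ γ)
    (hγ1 : γ < 1) (hρ : ∀ s, 0 < ρ s) (l : StrongDual ℝ (S → A → ℝ)) :
    ∃! x, x ∈ l.toExposed (occupancyPolytope K γ ρ) ∧
      IsMaxOn condEntropy (l.toExposed (occupancyPolytope K γ ρ)) x := by
  have hcompact : IsCompact (occupancyPolytope K γ ρ) := isCompact_occupancyPolytope hK hγ1.ne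
  have hface : IsExposed ℝ (occupancyPolytope K γ ρ) (l.toExposed (occupancyPolytope K γ ρ)) :=
    ContinuousLinearMap.toExposed.isExposed
  have hne : (l.toExposed (occupancyPolytope K γ ρ)).Nonempty :=
    hcompact.exists_isMaxOn
      (nonempty_occupancyPolytope hK hγ0 hγ1 fun s => (hρ s).le) l.continuous.continuousOn
  refine existsUnique_isMaxOn_of_strictConcaveOn (hface.isCompact hcompact) hne ?_ ?_
  · exact (strictConcaveOn_condEntropy_occupancyPolytope hK hγ0 hγ1 hρ).subset hface.subset
      (hface.convex convex_occupancyPolytope)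
  · exact continuousOn_condEntropy.mono fun x hx s =>
      (stateMarginal_pos_of_mem_occupancyPolytope hK hγ0 hγ1 hρ (hface.subset hx) s).ne'

end ConditionalEntropy

section OptimalPolicies

variable [Fintype S] [Fintype A]

/-- The expected one-step reward as a linear functional of the occupancy measure. -/
def rewardFunctional (r : S → A → ℝ) : StrongDual ℝ (S → A → ℝ) :=
  ∑ s, ∑ a, r s a • (ContinuousLinearMap.proj (R := ℝ) (φ := fun _ : A => ℝ) a ∘L
    ContinuousLinearMap.proj (φ := fun _ : S => A → ℝ) s)

lemma rewardFunctional_apply (r x : S → A → ℝ) :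
    rewardFunctional r x = ∑ s, ∑ a, r s a * x s a := by
  simp [rewardFunctional]

variable [DecidableEq S] {K : S → A → S → ℝ} {γ : ℝ} {ρ : S → ℝ}

/-- Membership in `Π*`: the policies maximizing the unregularized return. -/
def IsOptimalPolicy (K : S → A → S → ℝ) (r : S → A → ℝ) (γ : ℝ) (ρ : S → ℝ)
    (π : S → A → ℝ) : Prop :=
  IsPolicy π ∧ ∀ π', IsPolicy π' → Jreg K r γ 0 ρ π' ≤ Jreg K r γ 0 ρ π

lemma rewardFunctional_occupancy (hK : IsKernel K) (hγ : |γ| < 1) (r : S → A → ℝ)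
    {π : S → A → ℝ} (hπ : IsPolicy π) :
    rewardFunctional r (occupancy K γ ρ π) = (1 - γ) * Jreg K r γ 0 ρ π := by
  simp only [one_sub_mul_Jreg (Pmat_mem_rowStochastic hK hπ) hγ, rewardFunctional_apply,
    occupancy, dotProduct, regCost, zero_mul, add_zero, mul_sum]
  exact sum_congr rfl fun s _ => sum_congr rfl fun a _ => by ring

lemma bijOn_occupancy_isOptimalPolicy (hK : IsKernel K) (hγ0 : 0 ≤ γ) (hγ1 : γ < 1)
    (hρ : ∀ s, 0 < ρ s) (r : S → A → ℝ) :
    Set.BijOn (occupancy K γ ρ) {π | IsOptimalPolicy K r γ ρ π}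
      ((rewardFunctional r).toExposed (occupancyPolytope K γ ρ)) := by
  have hbij := bijOn_occupancy hK hγ0 hγ1 hρ
  have hreward {π : S → A → ℝ} (hπ : IsPolicy π) :=
    rewardFunctional_occupancy (ρ := ρ) hK (abs_lt.2 ⟨by linarith, hγ1⟩) r hπ
  have hle {π π' : S → A → ℝ} (hπ : IsPolicy π) (hπ' : IsPolicy π') :
      rewardFunctional r (occupancy K γ ρ π') ≤ rewardFunctional r (occupancy K γ ρ π) ↔
        Jreg K r γ 0 ρ π' ≤ Jreg K r γ 0 ρ π := by
    rw [hreward hπ, hreward hπ', mul_le_mul_iff_right₀ (sub_pos.2 hγ1)]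
  refine ⟨fun π ⟨hπ, hopt⟩ => ⟨hbij.mapsTo hπ, ?_⟩, hbij.injOn.mono fun π hπ => hπ.1, ?_⟩
  · intro x hx
    obtain ⟨π', hπ', rfl⟩ := hbij.surjOn hx
    exact (hle hπ hπ').2 (hopt π' hπ')
  · rintro x ⟨hx, hmax⟩
    obtain ⟨π, hπ, rfl⟩ := hbij.surjOn hx
    exact ⟨π, ⟨hπ, fun π' hπ' => (hle hπ hπ').1 (hmax _ (hbij.mapsTo hπ'))⟩, rfl⟩

end OptimalPolicies

/-- if `ρ` is strictly positive, there is exactly one optimal policy maximizing the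
discounted-visitation-weighted entropy over the set `Π*` of optimal policies. -/
theorem stmt_0 [Fintype S] [Fintype A] [DecidableEq S] [Nonempty S] [Nonempty A]
    (K : S → A → S → ℝ) (hK : IsKernel K)
    (γ : ℝ) (hγ0 : 0 < γ) (hγ1 : γ < 1)
    (ρ : S → ℝ) (hρpos : ∀ s, 0 < ρ s) (hρ1 : ∑ s, ρ s = 1)
    (r : S → A → ℝ) :
    ∃! πstar : S → A → ℝ,
      (IsPolicy πstar ∧ ∀ π, IsPolicy π → Jreg K r γ 0 ρ π ≤ Jreg K r γ 0 ρ πstar) ∧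
      ∀ π, (IsPolicy π ∧ ∀ π', IsPolicy π' → Jreg K r γ 0 ρ π' ≤ Jreg K r γ 0 ρ π) →
        ∑ s, dvisit K γ ρ π s * entS π s ≤ ∑ s, dvisit K γ ρ πstar s * entS πstar s := by
  have hbij := bijOn_occupancy_isOptimalPolicy hK hγ0.le hγ1 hρpos r
  have hent {π : S → A → ℝ} (hπ : IsPolicy π) :=
    condEntropy_occupancy hK hγ0.le hγ1 hρpos hπ
  obtain ⟨x, ⟨hx, hmax⟩, huniq⟩ :=
    existsUnique_isMaxOn_condEntropy_toExposed hK hγ0.le hγ1 hρpos (rewardFunctional r)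
  obtain ⟨π, hπ, rfl⟩ := hbij.surjOn hx
  refine ⟨π, ⟨hπ, fun π' hπ' => ?_⟩, fun π' ⟨hπ', hmax'⟩ => ?_⟩
  · rw [← hent hπ'.1, ← hent hπ.1]
    exact hmax (hbij.mapsTo hπ')
  · refine hbij.injOn hπ' hπ (huniq _ ⟨hbij.mapsTo hπ', fun y hy => ?_⟩)
    obtain ⟨π'', hπ'', rfl⟩ := hbij.surjOn hy
    simpa only [Set.mem_ofPred_eq, hent hπ''.1, hent hπ'.1] using hmax' π'' hπ''
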